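/- Let β > 1 with β ∉ ℤ, let A = {0,1,…,⌊β⌋}, and let (t_j)_{j≥1} be the quasi-greedy (infinite Rényi) expansion of 1 in base β, i.e., t_j ∈ A for all j, Σ_{j=1}^∞ t_j/β^j = 1, for every k ≥ 1 the shifted sequence (t_{k+j})_{j≥1} is lexicographically ≤ (t_j)_{j≥1}, and t_j ≠ 0 for infinitely many j. Assume (t_j) is NOT of the form (m, m, …, m, p)^ω with 0 ≤ p < m (i.e., β is not confluent). Then the set of x ∈ [0,1) possessing an optimal (β,A)-representation has Lebesgue measure zero. -/

import Mathlib

/-- A `(γ, B)`-representation of `x`: a sequence of digits `b i ∈ B` (here `b i` is the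
digit `b_{i+1}` of the paper, i.e. sequences are 0-indexed) with `x = ∑_{i ≥ 1} b_i / γ^i`. -/
def IsRep (γ : ℝ) (B : Set ℝ) (b : ℕ → ℝ) (x : ℝ) : Prop :=
  (∀ i, b i ∈ B) ∧ HasSum (fun i : ℕ => b i / γ ^ (i + 1)) x

/-- `J_{γ,B}`: the set of real numbers admitting a `(γ,B)`-representation. -/
def RepSet (γ : ℝ) (B : Set ℝ) : Set ℝ := {x | ∃ b, IsRep γ B b x}

/-- A `(γ,B)`-representation `c` of `x` is optimal if its partial sums approximate `x`
at least as well as those of any other `(γ,B)`-representation of `x`. -/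
def IsOptimalRep (γ : ℝ) (B : Set ℝ) (c : ℕ → ℝ) (x : ℝ) : Prop :=
  IsRep γ B c x ∧ ∀ b : ℕ → ℝ, IsRep γ B b x → ∀ n : ℕ, 1 ≤ n →
    |x - ∑ i ∈ Finset.range n, c i / γ ^ (i + 1)| ≤
      |x - ∑ i ∈ Finset.range n, b i / γ ^ (i + 1)|

/-- The digit alphabet `{0, 1, …, M}` as a set of reals. -/
def digitSet (M : ℤ) : Set ℝ := (fun k : ℤ => (k : ℝ)) '' Set.Icc 0 M

open MeasureTheory Set
open scoped Pointwise

/-- Self-similarity argument: a set compatible with a full affine tiling which misses an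
interval is null. -/
lemma null_of_tiles {ι : Type} [Countable ι] (S : Set ℝ) (hS : S ⊆ Ico (0:ℝ) 1)
    (u l : ι → ℝ) (q : ℝ) (hq1 : q < 1) (hl0 : ∀ i, 0 < l i) (hlq : ∀ i, l i ≤ q)
    (hcov : ∀ x ∈ Ico (0:ℝ) 1, ∃ i, x ∈ Ico (u i) (u i + l i))
    (hIco : ∀ i, ∀ θ ∈ Ico (0:ℝ) 1, u i + l i * θ ∈ Ico (0:ℝ) 1)
    (hsum : ∑' i, ENNReal.ofReal (l i) = 1)
    (hinv : ∀ i, ∀ θ ∈ Ico (0:ℝ) 1, u i + l i * θ ∈ S → θ ∈ S)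
    (a b : ℝ) (ha : 0 ≤ a) (hab : a < b) (hb : b ≤ 1) (hmiss : ∀ x ∈ Ioo a b, x ∉ S) :
    volume S = 0 := by
  set m := volume S with hm
  have hmfin : m ≠ ⊤ := by
    have : m ≤ volume (Ico (0:ℝ) 1) := measure_mono hS
    rw [Real.volume_Ico] at this
    exact ne_top_of_le_ne_top ENNReal.ofReal_ne_top this
  -- upper bound on self-similar pieces
  have hup : ∀ v k : ℝ, 0 < k → (∀ θ ∈ Ico (0:ℝ) 1, v + k * θ ∈ S → θ ∈ S) →
      volume (S ∩ Ico v (v + k)) ≤ ENNReal.ofReal k * m := by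
    intro v k hk h
    have hsub : S ∩ Ico v (v + k) ⊆ (fun x => v + x) '' ((fun x => k * x) '' S) := by
      rintro x ⟨hx, hx1, hx2⟩
      refine ⟨x - v, ⟨(x - v) / k, ?_, ?_⟩, by simp⟩
      · apply h
        · constructor
          · apply div_nonneg <;> linarith
          · rw [div_lt_one hk]; linarith
        · rw [mul_div_cancel₀ _ hk.ne']; simpa using hx
      · simp only; rw [mul_div_cancel₀ _ hk.ne']
    refine (measure_mono hsub).trans ?_
    rw [Set.image_add_left, measure_preimage_add]
    have := Measure.addHaar_smul (volume : Measure ℝ) k S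
    have h3 : (fun x => k * x) '' S = k • S := rfl
    rw [h3, this]
    simp [abs_of_pos hk, hm]
  have key : ∀ N : ℕ, ∀ x ∈ Ico (0:ℝ) 1, ∃ v k : ℝ, 0 < k ∧ k ≤ q ^ N ∧ x ∈ Ico v (v + k) ∧
      (∀ θ ∈ Ico (0:ℝ) 1, v + k * θ ∈ S → θ ∈ S) ∧
      ENNReal.ofReal k * m ≤ volume (S ∩ Ico v (v + k)) := by
    intro N
    induction N with
    | zero =>
      intro x hx
      refine ⟨0, 1, one_pos, by simp, by simpa using hx, by simp, ?_⟩
      rw [zero_add, inter_eq_left.mpr hS]; simp [hm]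
    | succ N ih =>
      intro x hx
      obtain ⟨v, k, hk, hkq, hxv, hi, hlow⟩ := ih x hx
      have hth : ∀ x ∈ Ico v (v + k), (x - v) / k ∈ Ico (0:ℝ) 1 := by
        rintro x ⟨h1, h2⟩
        constructor
        · apply div_nonneg <;> linarith
        · rw [div_lt_one hk]; linarith
      have hmem : ∀ x, ∀ i, (x - v) / k ∈ Ico (u i) (u i + l i) →
          x ∈ Ico (v + k * u i) (v + k * u i + k * l i) := by
        rintro x i ⟨h1, h2⟩
        rw [le_div_iff₀ hk] at h1
        rw [div_lt_iff₀ hk] at h2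
        constructor <;> nlinarith
      have hinv' : ∀ i, ∀ θ ∈ Ico (0:ℝ) 1, v + k * u i + k * l i * θ ∈ S → θ ∈ S := by
        intro i θ hθ h
        by_cases hmem2 : u i + l i * θ ∈ Ico (0:ℝ) 1
        · exact hinv i θ hθ (hi _ hmem2 (by convert h using 1; ring))
        · exfalso
          exact hmem2 (hIco i θ hθ)
      obtain ⟨i, hxi⟩ := hcov _ (hth x hxv)
      have hkl : ∀ j, 0 < k * l j := fun j => mul_pos hk (hl0 j)
      refine ⟨v + k * u i, k * l i, hkl i, ?_, hmem x i hxi, hinv' i, ?_⟩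
      · rw [pow_succ]
        exact mul_le_mul hkq (hlq i) (hl0 i).le (hk.le.trans hkq)
      · by_contra hlt
        push Not at hlt
        have hle : ∀ j, volume (S ∩ Ico (v + k * u j) (v + k * u j + k * l j)) ≤
            ENNReal.ofReal (k * l j) * m := fun j => hup _ _ (hkl j) (hinv' j)
        have htot : ∑' j, ENNReal.ofReal (k * l j) * m = ENNReal.ofReal k * m := by
          rw [ENNReal.tsum_mul_right]
          simp_rw [ENNReal.ofReal_mul hk.le]
          rw [ENNReal.tsum_mul_left, hsum, mul_one]
        have hfin : ∑' j, ENNReal.ofReal (k * l j) * m ≠ ⊤ := by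
          rw [htot]; exact ENNReal.mul_ne_top ENNReal.ofReal_ne_top hmfin
        have hs : ∑' j, volume (S ∩ Ico (v + k * u j) (v + k * u j + k * l j)) <
            ∑' j, ENNReal.ofReal (k * l j) * m :=
          ENNReal.tsum_lt_tsum (ne_top_of_le_ne_top hfin (ENNReal.tsum_le_tsum hle)) hle hlt
        have hc : volume (S ∩ Ico v (v + k)) ≤
            ∑' j, volume (S ∩ Ico (v + k * u j) (v + k * u j + k * l j)) := by
          refine (measure_mono ?_).trans (measure_iUnion_le _)
          rintro y ⟨hy, hyv⟩
          obtain ⟨j, hj⟩ := hcov _ (hth y hyv)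
          exact mem_iUnion.mpr ⟨j, hy, hmem y j hj⟩
        rw [htot] at hs
        exact absurd (hlow.trans hc) (not_le.mpr hs)
  have hq0 : 0 ≤ q := by
    obtain ⟨i, -⟩ := hcov 0 (by simp)
    exact (hl0 i).le.trans (hlq i)
  obtain ⟨N, hN⟩ := exists_pow_lt_of_lt_one (show 0 < (b - a) / 2 by linarith) hq1
  obtain ⟨v, k, hk, hkq, ⟨h1, h2⟩, -, hlow⟩ := key N ((a + b) / 2) ⟨by linarith, by linarith⟩
  have hempty : S ∩ Ico v (v + k) = ∅ := by
    ext y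
    simp only [mem_inter_iff, mem_empty_iff_false, iff_false, not_and]
    intro hy hyv
    exact hmiss y ⟨by linarith [hyv.1], by linarith [hyv.2]⟩ hy
  rw [hempty, measure_empty] at hlow
  have := le_antisymm hlow zero_le
  rcases mul_eq_zero.mp this with h | h
  · exact absurd (ENNReal.ofReal_eq_zero.mp h) (not_le.mpr hk)
  · exact h

lemma exists_rep {β : ℝ} (hβ : 1 < β) {y : ℝ} (hy : y ∈ Ico (0:ℝ) 1) :
    ∃ g, IsRep β (digitSet ⌊β⌋) g y := by
  have hβ0 : 0 < β := by linarith
  let T : ℕ → ℝ := fun n => (fun z => Int.fract (β * z))^[n] y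
  have hT0 : T 0 = y := rfl
  have hTs : ∀ n, T (n+1) = Int.fract (β * T n) := fun n => Function.iterate_succ_apply' _ _ _
  have hT : ∀ n, T n ∈ Ico (0:ℝ) 1 := by
    intro n
    cases n with
    | zero => exact hy
    | succ n => rw [hTs]; exact ⟨Int.fract_nonneg _, Int.fract_lt_one _⟩
  have hd : ∀ n, (0:ℤ) ≤ ⌊β * T n⌋ := fun n => Int.floor_nonneg.mpr (mul_nonneg hβ0.le (hT n).1)
  have hpart : ∀ n, ∑ i ∈ Finset.range n, ((⌊β * T i⌋ : ℤ) : ℝ) / β ^ (i+1) = y - T n / β ^ n := by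
    intro n
    induction n with
    | zero => simp [hT0]
    | succ n ih =>
      rw [Finset.sum_range_succ, ih, hTs, Int.fract]
      field_simp
      ring
  refine ⟨fun i => ((⌊β * T i⌋ : ℤ) : ℝ), fun i => ⟨_, ⟨hd i, ?_⟩, rfl⟩, ?_⟩
  · apply Int.floor_le_floor
    nlinarith [(hT i).2]
  · rw [hasSum_iff_tendsto_nat_of_nonneg]
    · simp_rw [hpart]
      have : Filter.Tendsto (fun n => T n / β ^ n) Filter.atTop (nhds 0) := by
        refine squeeze_zero (fun n => div_nonneg (hT n).1 (by positivity)) (g := fun n => (1/β)^n) ?_ ?_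
        · intro n
          rw [div_pow, one_pow]
          exact div_le_div_of_nonneg_right (hT n).2.le (by positivity)
        · exact tendsto_pow_atTop_nhds_zero_of_lt_one (by positivity) (by rw [div_lt_one hβ0]; exact hβ)
      simpa using tendsto_const_nhds.sub this
    · intro i
      have : (0:ℝ) ≤ ((⌊β * T i⌋ : ℤ) : ℝ) := by exact_mod_cast hd i
      positivity

lemma rep_concat {β : ℝ} (hβ : 1 < β) {B : Set ℝ} (n : ℕ) (b g : ℕ → ℝ) {θ : ℝ}
    (hb : ∀ i < n, b i ∈ B) (hg : IsRep β B g θ) :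
    IsRep β B (fun i => if i < n then b i else g (i - n))
      (∑ i ∈ Finset.range n, b i / β ^ (i+1) + θ / β ^ n) := by
  have hβ0 : 0 < β := by linarith
  constructor
  · intro i
    simp only
    split_ifs with h
    · exact hb i h
    · exact hg.1 _
  · rw [← hasSum_nat_add_iff' n]
    have h1 : ∑ i ∈ Finset.range n, (if i < n then b i else g (i - n)) / β ^ (i+1)
        = ∑ i ∈ Finset.range n, b i / β ^ (i+1) :=
      Finset.sum_congr rfl (fun i hi => by rw [if_pos (Finset.mem_range.mp hi)])
    rw [h1, add_sub_cancel_left]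
    have hfin := hg.2.div_const (β ^ n)
    have hfun : (fun i => (if i + n < n then b (i+n) else g (i + n - n)) / β ^ (i + n + 1)) =
        fun i => g i / β ^ (i+1) / β ^ n := by
      funext i
      have : ¬ (i + n < n) := by omega
      rw [if_neg this, Nat.add_sub_cancel, div_div, ← pow_add]
      congr 2
      omega
    rw [hfun]
    exact hfin

lemma rep_tail {β : ℝ} (hβ : 1 < β) {B : Set ℝ} (n : ℕ) {c : ℕ → ℝ} {x : ℝ}
    (hc : IsRep β B c x) :
    IsRep β B (fun i => c (i + n)) (β ^ n * (x - ∑ i ∈ Finset.range n, c i / β ^ (i+1))) := by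
  have hβ0 : 0 < β := by linarith
  refine ⟨fun i => hc.1 _, ?_⟩
  have := ((hasSum_nat_add_iff' n).mpr hc.2).mul_left (β ^ n)
  have hfun : (fun i => c (i + n) / β ^ (i+1)) =
      fun i => β ^ n * (c (i + n) / β ^ (i + n + 1)) := by
    funext i
    have h : β ^ (i + n + 1) = β ^ n * β ^ (i+1) := by rw [← pow_add]; congr 1; omega
    rw [h]
    field_simp
  rw [hfun]
  exact this

lemma digit_nonneg {M : ℤ} {a : ℝ} (h : a ∈ digitSet M) : 0 ≤ a := by
  obtain ⟨k, hk, rfl⟩ := h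
  simpa using (show (0:ℝ) ≤ (k:ℝ) by exact_mod_cast hk.1)

lemma rep_nonneg {β : ℝ} (hβ : 1 < β) {M : ℤ} {c : ℕ → ℝ} {x : ℝ}
    (hc : IsRep β (digitSet M) c x) : 0 ≤ x := by
  have hβ0 : 0 < β := by linarith
  refine hc.2.nonneg (fun i => ?_)
  have := digit_nonneg (hc.1 i)
  positivity

lemma partial_le {β : ℝ} (hβ : 1 < β) {M : ℤ} {c : ℕ → ℝ} {x : ℝ}
    (hc : IsRep β (digitSet M) c x) (n : ℕ) :
    ∑ i ∈ Finset.range n, c i / β ^ (i+1) ≤ x := by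
  have hβ0 : 0 < β := by linarith
  have := rep_nonneg hβ (rep_tail hβ n hc)
  have h2 : 0 < β ^ n := by positivity
  by_contra h
  push Not at h
  nlinarith

/-- An optimal representation beats every finite word that can be completed. -/
lemma opt_word {β : ℝ} (hβ : 1 < β) {c : ℕ → ℝ} {x : ℝ}
    (hc : IsOptimalRep β (digitSet ⌊β⌋) c x) (n : ℕ) (hn : 1 ≤ n) (b : ℕ → ℝ)
    (hb : ∀ i < n, b i ∈ digitSet ⌊β⌋) {θ : ℝ} (hθ : θ ∈ Ico (0:ℝ) 1)
    (hx : x = ∑ i ∈ Finset.range n, b i / β ^ (i+1) + θ / β ^ n) :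
    ∑ i ∈ Finset.range n, b i / β ^ (i+1) ≤ ∑ i ∈ Finset.range n, c i / β ^ (i+1) := by
  have hβ0 : 0 < β := by linarith
  obtain ⟨g, hg⟩ := exists_rep hβ hθ
  have h1 := rep_concat hβ n b g hb hg
  rw [← hx] at h1
  have h2 := hc.2 _ h1 n hn
  have h3 := partial_le hβ hc.1 n
  have h4 := partial_le hβ h1 n
  rw [abs_of_nonneg (by linarith), abs_of_nonneg (by linarith)] at h2
  have h5 : ∑ i ∈ Finset.range n, (if i < n then b i else g (i - n)) / β ^ (i+1)
        = ∑ i ∈ Finset.range n, b i / β ^ (i+1) :=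
      Finset.sum_congr rfl (fun i hi => by rw [if_pos (Finset.mem_range.mp hi)])
  rw [h5] at h2
  linarith

lemma opt_head {β : ℝ} (hβ : 1 < β) {c : ℕ → ℝ} {x : ℝ}
    (hc : IsOptimalRep β (digitSet ⌊β⌋) c x) {a : ℤ} (ha0 : 0 ≤ a) (haM : a ≤ ⌊β⌋)
    {y : ℝ} (hy : y ∈ Ico (0:ℝ) 1) (hx : x = (a + y) / β) : c 0 = a := by
  have hβ0 : 0 < β := by linarith
  have h1 := opt_word hβ hc 1 le_rfl (fun _ => (a:ℝ)) (fun i _ => ⟨a, ⟨ha0, haM⟩, rfl⟩) hy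
    (by simp [hx]; ring)
  have h2 := partial_le hβ hc.1 1
  simp only [Finset.sum_range_one, zero_add, pow_one] at h1 h2
  obtain ⟨k, hk, hk2⟩ := hc.1.1 0
  simp only at hk2
  rw [← hk2] at h1 h2 ⊢
  rw [div_le_div_iff_of_pos_right hβ0] at h1
  rw [hx, div_le_div_iff_of_pos_right hβ0] at h2
  have h3 : a ≤ k := by exact_mod_cast h1
  have h4 : (k:ℝ) < (a + 1 : ℤ) := by push_cast; linarith [hy.2]
  have h5 : k < a + 1 := by exact_mod_cast h4
  have : k = a := by omega
  rw [this]

/-- Points of `[0,1)` with an optimal representation. -/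
def OptSet (β : ℝ) : Set ℝ :=
  {x : ℝ | x ∈ Set.Ico (0 : ℝ) 1 ∧ ∃ c : ℕ → ℝ, IsOptimalRep β (digitSet ⌊β⌋) c x}

lemma opt_step {β : ℝ} (hβ : 1 < β) {x : ℝ} (hx : x ∈ OptSet β) {a : ℤ} (ha0 : 0 ≤ a)
    (haM : a ≤ ⌊β⌋) {y : ℝ} (hy : y ∈ Ico (0:ℝ) 1) (hxy : x = (a + y) / β) : y ∈ OptSet β := by
  have hβ0 : 0 < β := by linarith
  obtain ⟨-, c, hc⟩ := hx
  have hc0 := opt_head hβ hc ha0 haM hy hxy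
  refine ⟨hy, fun i => c (i+1), ?_, ?_⟩
  · have := rep_tail hβ 1 hc.1
    convert this using 1
    simp [hc0, hxy]
    field_simp
    ring
  · intro b hb n hn
    have h1 := rep_concat hβ (B := digitSet ⌊β⌋) 1 (fun _ => (a:ℝ)) b (fun i _ => ⟨a, ⟨ha0, haM⟩, rfl⟩) hb
    have h2 : ∑ i ∈ Finset.range 1, (a:ℝ) / β ^ (i+1) + y / β ^ 1 = x := by
      simp [hxy]; ring
    rw [h2] at h1
    have h3 := hc.2 _ h1 (n+1) (by omega)
    rw [Finset.sum_range_succ', Finset.sum_range_succ'] at h3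
    simp only [hc0, zero_add, pow_one, Nat.add_sub_cancel, zero_lt_one, if_true] at h3
    have h4 : ∀ i : ℕ, ¬ (i + 1 < 1) := by intro i; omega
    simp only [h4, if_false] at h3
    have key : ∀ d : ℕ → ℝ, x - (∑ k ∈ Finset.range n, d k / β ^ (k+1+1) + a / β) =
        (y - ∑ k ∈ Finset.range n, d k / β ^ (k+1)) / β := by
      intro d
      rw [sub_div, Finset.sum_div, hxy, add_div]
      have : ∀ k, d k / β ^ (k+1+1) = d k / β ^ (k+1) / β := by
        intro k; rw [div_div, ← pow_succ]
      simp_rw [this]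
      ring
    rw [key b, key (fun k => c (k+1)), abs_div, abs_div, abs_of_pos hβ0,
      div_le_div_iff_of_pos_right hβ0] at h3
    exact h3

/-- If some word beats `1 0 … 0`, then an interval misses the optimal set. -/
lemma bad_word {β : ℝ} (hβ : 1 < β) (n : ℕ) (b : ℕ → ℤ)
    (hb : ∀ i < n + 1, 0 ≤ b i ∧ b i ≤ ⌊β⌋) (y : ℝ)
    (hy : y / β ^ (n+1) = ∑ i ∈ Finset.range (n+1), (b i : ℝ) / β ^ (i+1))
    (hy1 : β ^ n < y) (x : ℝ) (hx1 : y / β ^ (n+1) ≤ x) (hx2 : x < (β ^ n + 1) / β ^ (n+1)) :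
    x ∉ OptSet β := by
  have hβ0 : 0 < β := by linarith
  rintro ⟨hx, c, hc⟩
  have hp : 0 < β ^ n := by positivity
  have hp1 : 0 < β ^ (n+1) := by positivity
  have hp2 : 1 ≤ β ^ n := one_le_pow₀ hβ.le
  have hx1' := hx1
  have hx2' := hx2
  rw [div_le_iff₀ hp1] at hx1'
  rw [lt_div_iff₀ hp1] at hx2'
  have hw := opt_word hβ hc (n+1) (by omega) (fun i => (b i : ℝ))
    (fun i hi => ⟨b i, hb i hi, rfl⟩) (θ := β ^ (n+1) * x - y) ⟨by linarith, by linarith⟩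
    (by rw [← hy]; field_simp; ring)
  rw [← hy] at hw
  have hM : (1:ℤ) ≤ ⌊β⌋ := Int.le_floor.mpr (by push_cast; exact hβ.le)
  have hc0 : c 0 = ((1:ℤ):ℝ) := by
    refine opt_head hβ hc (a := 1) (by norm_num) hM (y := β * x - 1) ⟨?_, ?_⟩ ?_
    · rw [pow_succ] at hx1'
      by_contra h
      nlinarith
    · rw [pow_succ] at hx2'
      by_contra h
      nlinarith
    · push_cast; field_simp; ring
  have hpl := partial_le hβ hc.1 (n+1)
  rw [Finset.sum_range_succ'] at hw hpl
  simp only [hc0, zero_add, pow_one, Int.cast_one] at hw hpl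
  have hdec : (β ^ n + 1) / β ^ (n+1) = 1 / β + 1 / β ^ (n+1) := by
    rw [pow_succ]; field_simp
  have hnn : ∀ i ∈ Finset.range n, 0 ≤ c (i+1) / β ^ (i+1+1) := by
    intro i _
    have := digit_nonneg (hc.1.1 (i+1))
    positivity
  by_cases hz : ∀ i ∈ Finset.range n, c (i+1) = 0
  · have : ∑ i ∈ Finset.range n, c (i+1) / β ^ (i+1+1) = 0 :=
      Finset.sum_eq_zero (fun i hi => by rw [hz i hi]; simp)
    rw [this, zero_add, div_le_div_iff₀ hp1 hβ0, pow_succ] at hw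
    nlinarith
  · push Not at hz
    obtain ⟨i, hi, hci⟩ := hz
    have h1 := Finset.single_le_sum hnn hi
    obtain ⟨k, hk, hk2⟩ := hc.1.1 (i+1)
    simp only at hk2
    have hk0 : k ≠ 0 := by
      rintro rfl; apply hci; rw [← hk2]; simp
    have hk1 : (1:ℝ) ≤ k := by
      have := hk.1
      have : (1:ℤ) ≤ k := by omega
      exact_mod_cast this
    have h2 : 1 / β ^ (n+1) ≤ c (i+1) / β ^ (i+1+1) := by
      rw [← hk2]
      have hin := Finset.mem_range.mp hi
      exact div_le_div₀ (by linarith) hk1 (by positivity) (pow_le_pow_right₀ hβ.le (by omega))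
    rw [hdec] at hx2
    linarith

/-- Remainders of the expansion of one. -/
noncomputable def rem (β : ℝ) (t : ℕ → ℤ) (k : ℕ) : ℝ :=
  β ^ k * (1 - ∑ i ∈ Finset.range k, (t i : ℝ) / β ^ (i+1))

section expansion

variable {β : ℝ} {t : ℕ → ℤ}

lemma rem_zero : rem β t 0 = 1 := by simp [rem]

lemma rem_succ (hβ : 1 < β) (k : ℕ) : rem β t (k+1) = β * rem β t k - t k := by
  have hβ0 : 0 < β := by linarith
  simp only [rem, Finset.sum_range_succ]
  field_simp
  ring

lemma rem_hasSum (hβ : 1 < β) (ht : ∀ j, 0 ≤ t j ∧ t j ≤ ⌊β⌋)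
    (hsum : HasSum (fun j : ℕ => (t j : ℝ) / β ^ (j + 1)) 1) (k : ℕ) :
    IsRep β (digitSet ⌊β⌋) (fun i => (t (i + k) : ℝ)) (rem β t k) :=
  rep_tail hβ k (c := fun i => (t i : ℝ)) ⟨fun i => ⟨t i, ht i, rfl⟩, hsum⟩

lemma rem_nonneg (hβ : 1 < β) (ht : ∀ j, 0 ≤ t j ∧ t j ≤ ⌊β⌋)
    (hsum : HasSum (fun j : ℕ => (t j : ℝ) / β ^ (j + 1)) 1) (k : ℕ) : 0 ≤ rem β t k :=
  rep_nonneg hβ (rem_hasSum hβ ht hsum k)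

lemma rem_pos (hβ : 1 < β) (ht : ∀ j, 0 ≤ t j ∧ t j ≤ ⌊β⌋)
    (hsum : HasSum (fun j : ℕ => (t j : ℝ) / β ^ (j + 1)) 1)
    (hnev0 : ∀ N : ℕ, ∃ j, N ≤ j ∧ t j ≠ 0) (k : ℕ) : 0 < rem β t k := by
  refine lt_of_le_of_ne (rem_nonneg hβ ht hsum k) (fun h => ?_)
  have h0 : ∀ n, rem β t (k + n) = 0 := by
    intro n
    induction n with
    | zero => exact h.symm
    | succ n ih =>
      have h1 := rem_succ (t := t) hβ (k+n)
      have h2 := rem_nonneg hβ ht hsum (k+n+1)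
      have h3 : (0:ℝ) ≤ t (k+n) := by exact_mod_cast (ht _).1
      rw [ih] at h1
      show rem β t (k+n+1) = 0
      linarith
  obtain ⟨j, hj, hne⟩ := hnev0 k
  obtain ⟨n, rfl⟩ := Nat.exists_eq_add_of_le hj
  have h1 := rem_succ (t := t) hβ (k+n)
  rw [h0 n, show k + n + 1 = k + (n+1) from rfl, h0 (n+1)] at h1
  apply hne
  have : (t (k+n) : ℝ) = 0 := by linarith
  exact_mod_cast this

lemma rem_exp (hβ : 1 < β) (k n : ℕ) :
    rem β t k = ∑ i ∈ Finset.range n, (t (k+i) : ℝ) / β ^ (i+1) + rem β t (k+n) / β ^ n := by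
  have hβ0 : 0 < β := by linarith
  induction n with
  | zero => simp
  | succ n ih =>
    rw [ih, Finset.sum_range_succ, show k + (n+1) = (k+n)+1 from rfl, rem_succ hβ (k+n)]
    field_simp
    ring

lemma rem_lex (hβ : 1 < β) (k j : ℕ) (heq : ∀ i < j, t (k+i) = t i) (hlt : t (k+j) < t j) :
    rem β t k - 1 ≤ (rem β t (k+j+1) - 1 - rem β t (j+1)) / β ^ (j+1) := by
  have hβ0 : 0 < β := by linarith
  have h1 := rem_exp (t := t) hβ k (j+1)
  have h2 := rem_exp (t := t) hβ 0 (j+1)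
  rw [rem_zero] at h2
  rw [Finset.sum_range_succ] at h1 h2
  simp only [zero_add] at h2
  have h3 : ∑ i ∈ Finset.range j, (t (k+i) : ℝ) / β ^ (i+1) =
      ∑ i ∈ Finset.range j, (t i : ℝ) / β ^ (i+1) :=
    Finset.sum_congr rfl (fun i hi => by rw [heq i (Finset.mem_range.mp hi)])
  rw [h3] at h1
  have h4 : (t (k+j) : ℝ) + 1 ≤ t j := by exact_mod_cast hlt
  have h5 : ((t (k+j) : ℝ) + 1) / β ^ (j+1) ≤ t j / β ^ (j+1) :=
    div_le_div_of_nonneg_right h4 (by positivity)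
  rw [add_div] at h5
  rw [sub_div, sub_div]
  rw [show k + (j+1) = k + j + 1 from rfl] at h1
  linarith

lemma rem_eq_one (hβ : 1 < β) (ht : ∀ j, 0 ≤ t j ∧ t j ≤ ⌊β⌋)
    (hsum : HasSum (fun j : ℕ => (t j : ℝ) / β ^ (j + 1)) 1) (k : ℕ)
    (h : ∀ j, t (k + j) = t j) : rem β t k = 1 := by
  have h1 := (rem_hasSum hβ ht hsum k).2
  have h2 : ∀ i, t (i + k) = t i := fun i => by rw [add_comm]; exact h i
  simp only [h2] at h1
  exact h1.unique hsum

lemma rem_le_one (hβ : 1 < β) (ht : ∀ j, 0 ≤ t j ∧ t j ≤ ⌊β⌋)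
    (hsum : HasSum (fun j : ℕ => (t j : ℝ) / β ^ (j + 1)) 1)
    (hshift : ∀ k : ℕ, 1 ≤ k →
      (∀ j, t (k + j) = t j) ∨ ∃ j, (∀ i < j, t (k + i) = t i) ∧ t (k + j) < t j) (k : ℕ) :
    rem β t k ≤ 1 := by
  have hβ0 : 0 < β := by linarith
  obtain ⟨C, hC0, hC⟩ : ∃ C : ℝ, 0 ≤ C ∧ ∀ k, rem β t k - 1 ≤ C := by
    have hgs : HasSum (fun i : ℕ => (⌊β⌋ : ℝ) / β * (1/β) ^ i) ((⌊β⌋ : ℝ) / β * (1 - 1/β)⁻¹) :=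
      (hasSum_geometric_of_lt_one (by positivity)
        (by rw [div_lt_one hβ0]; exact hβ)).mul_left _
    have hb : ∀ k, rem β t k ≤ (⌊β⌋ : ℝ) / β * (1 - 1/β)⁻¹ := by
      intro k
      refine hasSum_le (fun i => ?_) (rem_hasSum hβ ht hsum k).2 hgs
      have : (t (i+k) : ℝ) ≤ ⌊β⌋ := by exact_mod_cast (ht _).2
      calc (t (i+k) : ℝ) / β ^ (i+1) ≤ ⌊β⌋ / β ^ (i+1) :=
            div_le_div_of_nonneg_right this (by positivity)
        _ = _ := by rw [div_pow, one_pow, pow_succ]; field_simp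
    refine ⟨_, (rem_nonneg hβ ht hsum 0).trans (hb 0), fun k => ?_⟩
    linarith [hb k]
  have key : ∀ N k, rem β t k - 1 ≤ C / β ^ N := by
    intro N
    induction N with
    | zero => simpa using hC
    | succ N ih =>
      intro k
      have hpos : 0 ≤ C / β ^ (N+1) := by positivity
      rcases Nat.eq_zero_or_pos k with rfl | hk
      · rw [rem_zero]; linarith
      rcases hshift k hk with h | ⟨j, heq, hlt⟩
      · rw [rem_eq_one hβ ht hsum k h]; linarith
      · have h1 := rem_lex hβ k j heq hlt
        have h2 := ih (k+j+1)
        have h3 := rem_nonneg hβ ht hsum (j+1)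
        calc rem β t k - 1 ≤ (rem β t (k+j+1) - 1 - rem β t (j+1)) / β ^ (j+1) := h1
          _ ≤ (C / β ^ N) / β ^ (j+1) := div_le_div_of_nonneg_right (by linarith) (by positivity)
          _ ≤ (C / β ^ N) / β ^ 1 :=
            div_le_div_of_nonneg_left (by positivity) (by positivity)
              (pow_le_pow_right₀ hβ.le (by omega))
          _ = C / β ^ (N+1) := by rw [div_div, ← pow_add]
  have hlim : Filter.Tendsto (fun N : ℕ => C / β ^ N) Filter.atTop (nhds 0) :=
    tendsto_const_nhds.div_atTop (tendsto_pow_atTop_atTop_of_one_lt hβ)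
  have := ge_of_tendsto' hlim (fun N => key N k)
  linarith

lemma rem_lt_one_or (hβ : 1 < β) (ht : ∀ j, 0 ≤ t j ∧ t j ≤ ⌊β⌋)
    (hsum : HasSum (fun j : ℕ => (t j : ℝ) / β ^ (j + 1)) 1)
    (hshift : ∀ k : ℕ, 1 ≤ k →
      (∀ j, t (k + j) = t j) ∨ ∃ j, (∀ i < j, t (k + i) = t i) ∧ t (k + j) < t j)
    (hnev0 : ∀ N : ℕ, ∃ j, N ≤ j ∧ t j ≠ 0) (k : ℕ) (hk : 1 ≤ k) :
    rem β t k < 1 ∨ ∀ j, t (k + j) = t j := by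
  have hβ0 : 0 < β := by linarith
  rcases hshift k hk with h | ⟨j, heq, hlt⟩
  · exact Or.inr h
  · left
    have h1 := rem_lex hβ k j heq hlt
    have h2 := rem_le_one hβ ht hsum hshift (k+j+1)
    have h3 := rem_pos hβ ht hsum hnev0 (j+1)
    have h4 : (rem β t (k+j+1) - 1 - rem β t (j+1)) / β ^ (j+1) < 0 :=
      div_neg_of_neg_of_pos (by linarith) (by positivity)
    linarith

lemma tile_inv (hβ : 1 < β) (ht : ∀ j, 0 ≤ t j ∧ t j ≤ ⌊β⌋)
    (hr0 : ∀ k, 0 ≤ rem β t k) (hr1 : ∀ k, rem β t k ≤ 1) (k : ℕ) :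
    ∀ j : ℕ, ∀ d : ℤ, 0 ≤ d → d < t (j + k) → ∀ θ ∈ Ico (0:ℝ) 1,
      ∀ x, x = ∑ i ∈ Finset.range k, (t (j+i) : ℝ) / β ^ (i+1) + (d + θ) / β ^ (k+1) →
      x ∈ Ico (0:ℝ) 1 ∧ (x ∈ OptSet β → θ ∈ OptSet β) := by
  have hβ0 : 0 < β := by linarith
  have hI : ∀ k j : ℕ, ∀ d : ℤ, 0 ≤ d → d < t (j + k) → ∀ θ ∈ Ico (0:ℝ) 1,
      ∑ i ∈ Finset.range k, (t (j+i) : ℝ) / β ^ (i+1) + (d + θ) / β ^ (k+1) ∈ Ico (0:ℝ) 1 := by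
    intro k j d hd0 hd θ hθ
    have hd0' : (0:ℝ) ≤ d := by exact_mod_cast hd0
    have hd' : (d:ℝ) + 1 ≤ t (j+k) := by exact_mod_cast hd
    constructor
    · refine add_nonneg (Finset.sum_nonneg (fun i _ => ?_)) ?_
      · have : (0:ℝ) ≤ t (j+i) := by exact_mod_cast (ht _).1
        positivity
      · have := hθ.1
        positivity
    · have h1 := rem_exp (t := t) hβ j (k+1)
      rw [Finset.sum_range_succ] at h1
      have h2 : ((d:ℝ) + θ) / β ^ (k+1) < t (j+k) / β ^ (k+1) :=
        div_lt_div_of_pos_right (by linarith [hθ.2]) (by positivity)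
      have h3 : 0 ≤ rem β t (j+(k+1)) / β ^ (k+1) := div_nonneg (hr0 _) (by positivity)
      linarith [hr1 j]
  induction k with
  | zero =>
    intro j d hd0 hd θ hθ x hx
    refine ⟨hx ▸ hI 0 j d hd0 hd θ hθ, fun hxo => ?_⟩
    refine opt_step hβ hxo hd0 (hd.le.trans (ht _).2) hθ ?_
    rw [hx]; simp
  | succ k ih =>
    intro j d hd0 hd θ hθ x hx
    refine ⟨hx ▸ hI (k+1) j d hd0 hd θ hθ, fun hxo => ?_⟩
    have hd2 : d < t (j + 1 + k) := by rwa [show j + 1 + k = j + (k+1) by omega]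
    obtain ⟨h1, h2⟩ := ih (j+1) d hd0 hd2 θ hθ _ rfl
    refine h2 (opt_step hβ hxo (ht j).1 (ht j).2 h1 ?_)
    rw [hx, Finset.sum_range_succ', add_div (t j : ℝ), add_div (∑ i ∈ _, _), Finset.sum_div]
    have : ∀ i, (t (j+1+i) : ℝ) / β ^ (i+1) / β = t (j+(i+1)) / β ^ (i+1+1) := by
      intro i
      rw [div_div, ← pow_succ, show j + 1 + i = j + (i+1) by omega]
    simp_rw [this]
    rw [div_div _ _ β, ← pow_succ]
    simp
    ring

lemma gap_of (hβ : 1 < β) (ht : ∀ j, 0 ≤ t j ∧ t j ≤ ⌊β⌋)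
    (d : ℕ) (hd : t d < ⌊β⌋) (hr0 : 0 < rem β t (d+1)) (hr1 : rem β t (d+1) < 1)
    (hc : 1 < β ^ (d+1) * (β - 1) + rem β t (d+1)) :
    ∃ a b : ℝ, 0 ≤ a ∧ a < b ∧ b ≤ 1 ∧ ∀ x ∈ Ioo a b, x ∉ OptSet β := by
  have hβ0 : 0 < β := by linarith
  have hp : 0 < β ^ (d+1) := by positivity
  have hp2 : 0 < β ^ (d+1+1) := by positivity
  set y := β ^ (d+1) + 1 - rem β t (d+1) with hy
  refine ⟨y / β ^ (d+1+1), min 1 ((β ^ (d+1) + 1) / β ^ (d+1+1)), ?_, ?_, min_le_left _ _, ?_⟩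
  · apply div_nonneg _ hp2.le; linarith
  · rw [lt_min_iff]
    constructor
    · rw [div_lt_one hp2, pow_succ β (d+1)]; nlinarith
    · exact div_lt_div_of_pos_right (by linarith) hp2
  · intro x hx
    refine bad_word hβ (d+1)
      (fun i => if i = 0 then 0 else t (i-1) + if i = d + 1 then 1 else 0) ?_ y ?_ (by linarith)
      x hx.1.le (hx.2.trans_le (min_le_right _ _))
    · intro i hi
      have hM : (0:ℤ) ≤ ⌊β⌋ := (ht 0).1.trans (ht 0).2
      have := ht (i-1)
      by_cases h0 : i = 0
      · simp [h0, hM]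
      · by_cases h1 : i = d + 1
        · subst h1
          simp at this ⊢
          omega
        · simp [h0, h1, this]
    · rw [Finset.sum_range_succ', Finset.sum_range_succ]
      have h1 := rem_exp (t := t) hβ 0 (d+1)
      rw [rem_zero, Finset.sum_range_succ] at h1
      simp only [zero_add] at h1
      have h2 : ∑ i ∈ Finset.range d, (((if i + 1 = 0 then 0 else
          t (i+1-1) + if i + 1 = d + 1 then 1 else 0 : ℤ)) : ℝ) / β ^ (i+1+1) =
          (∑ i ∈ Finset.range d, (t i : ℝ) / β ^ (i+1)) / β := by
        rw [Finset.sum_div]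
        refine Finset.sum_congr rfl (fun i hi => ?_)
        have h3 := Finset.mem_range.mp hi
        have h4 : ¬ (i + 1 = d + 1) := by omega
        rw [if_neg (by omega), if_neg h4, div_div, ← pow_succ]
        simp
      rw [h2]
      have h5 : ∑ i ∈ Finset.range d, (t i : ℝ) / β ^ (i+1) =
        1 - t d / β ^ (d+1) - rem β t (d+1) / β ^ (d+1) := by linarith
      rw [h5, hy]
      simp
      field_simp
      ring

lemma confl {M : ℤ} (d : ℕ) (hM : ∀ i < d, t i = M) (hper : ∀ j, t (d + 1 + j) = t j) (j : ℕ) :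
    t j = if (j + 1) % (d + 1) = 0 then t d else M := by
  induction j using Nat.strong_induction_on with
  | _ j ih =>
    rcases lt_trichotomy j d with h | h | h
    · rw [hM j h, if_neg]
      rw [Nat.mod_eq_of_lt (by omega)]
      omega
    · subst h; simp
    · obtain ⟨i, rfl⟩ := Nat.exists_eq_add_of_le (show d + 1 ≤ j by omega)
      rw [hper, ih i (by omega), show d + 1 + i + 1 = (i + 1) + (d + 1) by ring,
        Nat.add_mod_right]

lemma exists_gap (hβ : 1 < β) (hβZ : ∀ n : ℤ, β ≠ n) (ht : ∀ j, 0 ≤ t j ∧ t j ≤ ⌊β⌋)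
    (hsum : HasSum (fun j : ℕ => (t j : ℝ) / β ^ (j + 1)) 1)
    (hshift : ∀ k : ℕ, 1 ≤ k →
      (∀ j, t (k + j) = t j) ∨ ∃ j, (∀ i < j, t (k + i) = t i) ∧ t (k + j) < t j)
    (hnev0 : ∀ N : ℕ, ∃ j, N ≤ j ∧ t j ≠ 0)
    (hnonconfluent : ¬ ∃ d : ℕ, 1 ≤ d ∧ ∃ m p : ℤ, 0 ≤ p ∧ p < m ∧
      ∀ j : ℕ, t j = if (j + 1) % (d + 1) = 0 then p else m) :
    ∃ a b : ℝ, 0 ≤ a ∧ a < b ∧ b ≤ 1 ∧ ∀ x ∈ Ioo a b, x ∉ OptSet β := by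
  have hβ0 : 0 < β := by linarith
  have hpos := rem_pos hβ ht hsum hnev0
  have hle := rem_le_one hβ ht hsum hshift
  have hor := rem_lt_one_or hβ ht hsum hshift hnev0
  have hs := rem_succ (β := β) (t := t) hβ
  have h1 := hs 0
  rw [rem_zero, mul_one, zero_add] at h1
  have hr1 : rem β t 1 < 1 := by
    refine lt_of_le_of_ne (hle 1) (fun h => hβZ (t 0 + 1) ?_)
    push_cast; linarith
  have ht0 : t 0 = ⌊β⌋ := by
    symm; rw [Int.floor_eq_iff]
    constructor <;> linarith [hpos 1]
  have hM1 : 1 ≤ ⌊β⌋ := Int.le_floor.mpr (by push_cast; exact hβ.le)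
  have hex : ∃ d, t d ≠ ⌊β⌋ := by
    by_contra h
    push Not at h
    have := rem_eq_one hβ ht hsum 1 (fun j => by rw [h, h])
    linarith
  classical
  let d := Nat.find hex
  have hd : t d ≠ ⌊β⌋ := Nat.find_spec hex
  have hdlt : ∀ i < d, t i = ⌊β⌋ := fun i hi => not_not.mp (Nat.find_min hex hi)
  have hdM : t d < ⌊β⌋ := lt_of_le_of_ne (ht d).2 hd
  have hd1 : 1 ≤ d := by
    rcases Nat.eq_zero_or_pos d with h | h
    · rw [h] at hd; exact absurd ht0 hd
    · exact h
  have hrd : rem β t (d+1) < 1 := by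
    rcases hor (d+1) (by omega) with h | h
    · exact h
    · exact absurd ⟨d, hd1, ⌊β⌋, t d, (ht d).1, hdM, confl d hdlt h⟩ hnonconfluent
  by_cases hc : 1 < β ^ (d+1) * (β - 1) + rem β t (d+1)
  · exact gap_of hβ ht d hdM (hpos _) hrd hc
  have hMone : ⌊β⌋ = 1 := by
    by_contra hne
    have h2 : 2 ≤ ⌊β⌋ := by omega
    have h3 : (2:ℝ) ≤ β := by
      have := Int.le_floor.mp h2
      exact_mod_cast this
    have : 1 ≤ β ^ (d+1) := one_le_pow₀ hβ.le
    apply hc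
    nlinarith [hpos (d+1)]
  have ht0R : (t 0 : ℝ) = 1 := by rw [ht0, hMone]; norm_num
  have h2 := hs 1
  have hβr : rem β t 1 = β - 1 := by linarith
  have hdone : d = 1 := by
    by_contra hne
    have ht1 : (t 1 : ℝ) = 1 := by rw [hdlt 1 (by omega), hMone]; norm_num
    have h3 : β * (β - 1) > 1 := by
      have := hpos 2
      rw [h2, hβr, ht1] at this
      linarith
    apply hc
    have h4 : β ^ 1 ≤ β ^ (d+1) := pow_le_pow_right₀ hβ.le (by omega)
    rw [pow_one] at h4
    nlinarith [hpos (d+1)]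
  rw [hdone] at hrd hdM hc
  have hex2 : ∃ e, 1 ≤ e ∧ t e ≠ 0 := hnev0 1
  let e := Nat.find hex2
  have he : 1 ≤ e ∧ t e ≠ 0 := Nat.find_spec hex2
  have helt : ∀ i, 1 ≤ i → i < e → t i = 0 := by
    intro i hi hie
    have := Nat.find_min hex2 hie
    push Not at this
    exact this hi
  have hte : t e = 1 := by have := ht e; have := he.2; omega
  have ht1 : t 1 = 0 := by have := ht 1; omega
  have he2 : 2 ≤ e := by
    by_contra h
    have : e = 1 := by omega
    rw [this] at hte; omega
  -- remainders up to e
  have hre : ∀ i, i < e → rem β t (i+1) = β ^ i * (β - 1) := by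
    intro i
    induction i with
    | zero => intro _; simp [hβr]
    | succ i ih =>
      intro hi
      rw [hs (i+1), ih (by omega), helt (i+1) (by omega) hi, pow_succ]
      push_cast; ring
  have hree : rem β t e = β ^ (e-1) * (β - 1) := by
    have := hre (e-1) (by omega)
    rwa [Nat.sub_add_cancel he.1] at this
  have hse := hs e
  rw [hte] at hse
  push_cast at hse
  have hpe := hpos (e+1)
  have hpow : β ^ e = β ^ (e-1) * β := by rw [← pow_succ, Nat.sub_add_cancel he.1]
  have htz : t (e-1) = 0 := helt (e-1) (by omega) (by omega)
  rcases lt_or_eq_of_le (hle e) with hlt | heq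
  · refine gap_of hβ ht (e-1) (by omega) ?_ ?_ ?_ <;> rw [Nat.sub_add_cancel he.1]
    · exact hpos e
    · exact hlt
    · rw [hpow]
      nlinarith [hpos e]
  · have he3 : 3 ≤ e := by
      by_contra h
      have : e = 2 := by omega
      rw [this] at heq
      linarith
    have hsub : e - 2 + 1 = e - 1 := by omega
    have hs1 := hs (e-1)
    rw [Nat.sub_add_cancel he.1, heq, htz] at hs1
    push_cast at hs1
    have hβ2 : β < 2 := by linarith
    refine gap_of hβ ht (e-2) (by have := helt (e-2) (by omega) (by omega); omega) ?_ ?_ ?_ <;>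
      rw [hsub]
    · exact hpos _
    · nlinarith
    · rw [← hree, heq]
      linarith [hpos (e-1)]

lemma opt_null (hβ : 1 < β) (hβZ : ∀ n : ℤ, β ≠ n) (ht : ∀ j, 0 ≤ t j ∧ t j ≤ ⌊β⌋)
    (hsum : HasSum (fun j : ℕ => (t j : ℝ) / β ^ (j + 1)) 1)
    (hshift : ∀ k : ℕ, 1 ≤ k →
      (∀ j, t (k + j) = t j) ∨ ∃ j, (∀ i < j, t (k + i) = t i) ∧ t (k + j) < t j)
    (hnev0 : ∀ N : ℕ, ∃ j, N ≤ j ∧ t j ≠ 0)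
    (hnonconfluent : ¬ ∃ d : ℕ, 1 ≤ d ∧ ∃ m p : ℤ, 0 ≤ p ∧ p < m ∧
      ∀ j : ℕ, t j = if (j + 1) % (d + 1) = 0 then p else m) :
    volume (OptSet β) = 0 := by
  have hβ0 : 0 < β := by linarith
  obtain ⟨a, b, ha, hab, hb, hmiss⟩ :=
    exists_gap hβ hβZ ht hsum hshift hnev0 hnonconfluent
  have htile : ∀ i : (Σ k : ℕ, Fin (t k).toNat), ∀ θ ∈ Ico (0:ℝ) 1,
      (∑ j ∈ Finset.range i.1, (t j : ℝ) / β ^ (j+1) + (i.2.val : ℝ) / β ^ (i.1+1)) +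
        1 / β ^ (i.1+1) * θ ∈ Ico (0:ℝ) 1 ∧
      ((∑ j ∈ Finset.range i.1, (t j : ℝ) / β ^ (j+1) + (i.2.val : ℝ) / β ^ (i.1+1)) +
        1 / β ^ (i.1+1) * θ ∈ OptSet β → θ ∈ OptSet β) := by
    rintro ⟨k, d, hd⟩ θ hθ
    refine tile_inv hβ ht (rem_nonneg hβ ht hsum) (rem_le_one hβ ht hsum hshift) k 0 d
      (by omega) (by rw [zero_add]; omega) θ hθ _ ?_
    simp only [zero_add]
    push_cast
    ring
  refine null_of_tiles (ι := Σ k : ℕ, Fin (t k).toNat) (OptSet β) (fun x hx => hx.1)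
    (fun i => ∑ j ∈ Finset.range i.1, (t j : ℝ) / β ^ (j+1) + (i.2.val : ℝ) / β ^ (i.1+1))
    (fun i => 1 / β ^ (i.1+1)) (1/β) (by rw [div_lt_one hβ0]; exact hβ)
    (fun i => by positivity) ?_ ?_ (fun i θ hθ => (htile i θ hθ).1) ?_
    (fun i θ hθ => (htile i θ hθ).2) a b ha hab hb hmiss
  · intro i
    have : β ^ 1 ≤ β ^ (i.1+1) := pow_le_pow_right₀ hβ.le (by omega)
    rw [pow_one] at this
    exact div_le_div_of_nonneg_left zero_le_one hβ0 this
  · intro x hx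
    have hex : ∃ k, x < ∑ j ∈ Finset.range k, (t j : ℝ) / β ^ (j+1) := by
      have := (hsum.tendsto_sum_nat).eventually (lt_mem_nhds hx.2)
      exact this.exists
    classical
    obtain ⟨k, hk⟩ : ∃ k, Nat.find hex = k + 1 := by
      refine Nat.exists_eq_succ_of_ne_zero (fun h => ?_)
      have := Nat.find_spec hex
      rw [h] at this
      simp at this
      linarith [hx.1]
    have h1 := Nat.find_spec hex
    rw [hk, Finset.sum_range_succ] at h1
    have h2 := Nat.find_min hex (m := k) (by omega)
    push Not at h2
    set s := ∑ j ∈ Finset.range k, (t j : ℝ) / β ^ (j+1) with hs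
    have hp : 0 < β ^ (k+1) := by positivity
    have hf0 : 0 ≤ ⌊(x - s) * β ^ (k+1)⌋ :=
      Int.floor_nonneg.mpr (mul_nonneg (by linarith) hp.le)
    have hf1 : ⌊(x - s) * β ^ (k+1)⌋ < t k := by
      rw [Int.floor_lt, ← lt_div_iff₀ hp]
      linarith
    refine ⟨⟨k, ⌊(x - s) * β ^ (k+1)⌋.toNat, by omega⟩, ?_⟩
    have hcast : ((⌊(x - s) * β ^ (k+1)⌋.toNat : ℕ) : ℝ) = (⌊(x - s) * β ^ (k+1)⌋ : ℤ) := by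
      exact_mod_cast congrArg (Int.cast : ℤ → ℝ) (Int.toNat_of_nonneg hf0)
    simp only [hcast]
    rw [← hs, add_assoc, ← add_div]
    constructor
    · have : (⌊(x - s) * β ^ (k+1)⌋ : ℝ) / β ^ (k+1) ≤ x - s := by
        rw [div_le_iff₀ hp]; exact Int.floor_le _
      linarith
    · have : x - s < ((⌊(x - s) * β ^ (k+1)⌋ : ℝ) + 1) / β ^ (k+1) := by
        rw [lt_div_iff₀ hp]; exact Int.lt_floor_add_one _
      linarith
  · rw [ENNReal.tsum_sigma (fun k (_ : Fin (t k).toNat) => ENNReal.ofReal (1 / β ^ (k+1)))]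
    have h1 : ∀ k : ℕ, ∑' _ : Fin (t k).toNat, ENNReal.ofReal (1 / β ^ (k+1)) =
        ENNReal.ofReal ((t k : ℝ) / β ^ (k+1)) := by
      intro k
      rw [tsum_fintype, Finset.sum_const, Finset.card_univ, Fintype.card_fin, nsmul_eq_mul,
        ← ENNReal.ofReal_natCast, ← ENNReal.ofReal_mul (by positivity)]
      congr 1
      have : (((t k).toNat : ℕ) : ℝ) = (t k : ℤ) := by
        exact_mod_cast congrArg (Int.cast : ℤ → ℝ) (Int.toNat_of_nonneg (ht k).1)
      rw [this]; ring
    simp_rw [h1]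
    rw [← ENNReal.ofReal_tsum_of_nonneg, hsum.tsum_eq, ENNReal.ofReal_one]
    · intro k
      have : (0:ℝ) ≤ t k := by exact_mod_cast (ht k).1
      positivity
    · exact hsum.summable

end expansion

/-- let `β > 1`, `β ∉ ℤ`, `A = {0,…,⌊β⌋}`, and let `(t_j)` be the
quasi-greedy expansion of `1` in base `β` (digits in `A`, `∑ t_j/β^j = 1`, every shift
lexicographically `≤ (t_j)`, not eventually zero). If `(t_j)` is not of the form
`(m,…,m,p)^ω` with `0 ≤ p < m` (i.e. `β` is not confluent), then the set of `x ∈ [0,1)`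
possessing an optimal `(β,A)`-representation has Lebesgue measure zero.
(`t` is 0-indexed: `t j` is the digit `t_{j+1}`.) -/
theorem almost_no_optimal_rep_nonconfluent
    (β : ℝ) (hβ : 1 < β) (hβZ : ∀ n : ℤ, β ≠ n)
    (t : ℕ → ℤ) (ht : ∀ j, 0 ≤ t j ∧ t j ≤ ⌊β⌋)
    (hsum : HasSum (fun j : ℕ => (t j : ℝ) / β ^ (j + 1)) 1)
    (hshift : ∀ k : ℕ, 1 ≤ k →
      (∀ j, t (k + j) = t j) ∨ ∃ j, (∀ i < j, t (k + i) = t i) ∧ t (k + j) < t j)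
    (hnev0 : ∀ N : ℕ, ∃ j, N ≤ j ∧ t j ≠ 0)
    (hnonconfluent : ¬ ∃ d : ℕ, 1 ≤ d ∧ ∃ m p : ℤ, 0 ≤ p ∧ p < m ∧
      ∀ j : ℕ, t j = if (j + 1) % (d + 1) = 0 then p else m) :
    MeasureTheory.volume
      {x : ℝ | x ∈ Set.Ico (0 : ℝ) 1 ∧
        ∃ c : ℕ → ℝ, IsOptimalRep β (digitSet ⌊β⌋) c x} = 0 := by
  exact opt_null hβ hβZ ht hsum hshift hnev0 hnonconfluent
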